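/- arXiv:1309.7891 — 6 statements merged into one kernel-verified Lean document; each statement's English description precedes it below -/
import Mathlib

section
/- For every matrix M ∈ ℝ^{m×n} and every positive integer k, there exists a matrix M' consisting of a subset of at most n(k+1) of the rows of M such that for every vector x ∈ ℝⁿ, if the number of rows r of M' with r·x ≠ 0 is at most k, then the number of rows of M with r·x ≠ 0 equals the number of rows of M' with r·x ≠ 0. -/
open Matrix

/-!
Choose disjoint sets of rows `B₀, …, Bₖ`, each `Bⱼ` a basis of the span of the rows outside
`B₀ ∪ ⋯ ∪ Bⱼ₋₁`, and let `T` be their union. If a row `r` outside `T` has `r ⬝ᵥ x ≠ 0`, then, since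
`r` lies in the span of each `Bⱼ`, every `Bⱼ` contains a row not orthogonal to `x`, so `T` contains
more than `k` such rows. Only the subspace of vectors orthogonal to `x` matters here, and any
subspace `U` can replace it.
-/

open Module Submodule

section DivisionRing

variable {ι K V : Type*} [DivisionRing K] [AddCommGroup V] [Module K V]

lemma exists_finset_card_le_finrank_and_span_image_eq (v : ι → V) (S : Set ι)
    [FiniteDimensional K (span K (v '' S))] :
    ∃ B : Finset ι, ↑B ⊆ S ∧ B.card ≤ finrank K (span K (v '' S)) ∧
      span K (v '' B) = span K (v '' S) := by
  classical
  obtain ⟨f, hfS, hf_span, -⟩ := exists_fun_fin_finrank_span_eq K (v '' S)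
  choose g hgS hgf using hfS
  refine ⟨Finset.univ.image g, ?_, ?_, ?_⟩
  · simpa only [Finset.coe_image, Finset.coe_univ, Set.image_univ] using Set.range_subset_iff.2 hgS
  · simpa only [Finset.card_univ, Fintype.card_fin] using
      Finset.card_image_le (s := Finset.univ) (f := g)
  · rw [Finset.coe_image, Finset.coe_univ, Set.image_univ, ← Set.range_comp,
      show v ∘ g = f from funext hgf, hf_span]

lemma exists_finset_subset_forall_mem_of_card_filter_notMem_lt (v : ι → V) (S : Set ι)
    [FiniteDimensional K (span K (v '' S))] (c : ℕ) :
    ∃ T : Finset ι, ↑T ⊆ S ∧ T.card ≤ finrank K (span K (v '' S)) * c ∧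
      ∀ (U : Submodule K V) [DecidablePred (· ∈ U)],
        (T.filter fun i => v i ∉ U).card < c → ∀ i ∈ S, i ∉ T → v i ∈ U := by
  classical
  induction c generalizing S with
  | zero => exact ⟨∅, by simp⟩
  | succ c ih =>
    obtain ⟨B, hBS, hB_card, hB_span⟩ :=
      exists_finset_card_le_finrank_and_span_image_eq (K := K) v S
    have hspan_le : span K (v '' (S \ B)) ≤ span K (v '' S) :=
      span_mono (Set.image_mono Set.sdiff_subset)
    have := finiteDimensional_of_le hspan_le
    obtain ⟨T, hTS, hT_card, hT⟩ := ih (S \ B)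
    refine ⟨B ∪ T, ?_, ?_, fun U _ hU i hiS hi => ?_⟩
    · rw [Finset.coe_union]
      exact Set.union_subset hBS (hTS.trans Set.sdiff_subset)
    · calc (B ∪ T).card
          ≤ B.card + T.card := Finset.card_union_le B T
        _ ≤ finrank K (span K (v '' S)) + finrank K (span K (v '' S)) * c :=
            add_le_add hB_card (hT_card.trans (Nat.mul_le_mul_right c (finrank_mono hspan_le)))
        _ = finrank K (span K (v '' S)) * (c + 1) := by ring
    · obtain ⟨hiB, hiT⟩ := Finset.notMem_union.1 hi
      by_cases hBU : ∀ j ∈ B, v j ∈ U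
      · have hSU : span K (v '' S) ≤ U := hB_span ▸ span_le.2 (Set.image_subset_iff.2 hBU)
        exact hSU (subset_span (Set.mem_image_of_mem v hiS))
      · push Not at hBU
        have hB_pos : 0 < (B.filter fun i => v i ∉ U).card :=
          Finset.card_pos.2 (Finset.filter_nonempty_iff.2 hBU)
        have hBT : Disjoint B T :=
          Finset.disjoint_right.2 fun j hjT => (hTS hjT).2
        rw [Finset.filter_union,
          Finset.card_union_of_disjoint (Finset.disjoint_filter_filter hBT)] at hU
        exact hT U (by omega) i ⟨hiS, hiB⟩ hiT

theorem matrix_row_submatrix_hamming_general (v : ι → V)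
    [hv : FiniteDimensional K (span K (Set.range v))] (k : ℕ) :
    ∃ T : Finset ι, T.card ≤ finrank K (span K (Set.range v)) * (k + 1) ∧
      ∀ (U : Submodule K V) [DecidablePred (· ∈ U)],
        (T.filter fun i => v i ∉ U).card ≤ k →
          {i | v i ∉ U} = (T.filter fun i => v i ∉ U : Set ι) := by
  rw [← Set.image_univ] at hv ⊢
  obtain ⟨T, -, hT_card, hT⟩ :=
    exists_finset_subset_forall_mem_of_card_filter_notMem_lt (K := K) v Set.univ (k + 1)
  refine ⟨T, hT_card, fun U _ hU => ?_⟩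
  ext i
  simpa using not_imp_comm.1 (hT U (Nat.lt_succ_of_le hU) i (Set.mem_univ i))

end DivisionRing

/-- For every real `m × n` matrix `M` and every positive integer `k`, there is a
row-submatrix `M'` of `M` (given by a set `T` of at most `n (k+1)` row indices)
such that for every `x ∈ ℝⁿ`, if at most `k` rows `r` of `M'` have `r ⬝ x ≠ 0`,
then the number of rows of `M` with `r ⬝ x ≠ 0` equals the number of rows of
`M'` with `r ⬝ x ≠ 0`. -/
theorem matrix_row_submatrix_hamming (m n k : ℕ) (hk : 0 < k)
    (M : Matrix (Fin m) (Fin n) ℝ) :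
    ∃ T : Finset (Fin m), T.card ≤ n * (k + 1) ∧
      ∀ x : Fin n → ℝ,
        (T.filter fun i => M i ⬝ᵥ x ≠ 0).card ≤ k →
          (Finset.univ.filter fun i : Fin m => M i ⬝ᵥ x ≠ 0).card
            = (T.filter fun i => M i ⬝ᵥ x ≠ 0).card := by
  classical
  obtain ⟨T, hT_card, hT⟩ := matrix_row_submatrix_hamming_general (K := ℝ) M.row k
  have hrank : finrank ℝ (span ℝ (Set.range M.row)) ≤ n := by
    simpa only [finrank_fin_fun] using finrank_le (span ℝ (Set.range M.row))
  refine ⟨T, hT_card.trans (Nat.mul_le_mul_right _ hrank), fun x hx => ?_⟩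
  let U : Submodule ℝ (Fin n → ℝ) := LinearMap.ker ((dotProductBilin ℝ ℝ).flip x)
  have mem_U (i : Fin m) : M.row i ∈ U ↔ M i ⬝ᵥ x = 0 := Iff.rfl
  have hrows := hT U (by simpa only [mem_U] using hx)
  refine congrArg Finset.card (Finset.coe_injective ?_)
  simpa only [mem_U, Finset.coe_filter_univ] using hrows
end

section
/- For every finite family S of affine linear equations in n real variables (each equation of the form a₁x₁ + a₂x₂ + ... + aₙxₙ + b = 0 with real coefficients a₁,...,aₙ and constant term b) and every positive integer k, there exists a subfamily S' ⊆ S containing at most (n+1)(k+1) equations such that every assignment of real values to the n variables that violates at most k equations of S' satisfies every equation of S \ S'. -/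
open Matrix

/-!
For a fixed assignment `x`, the value `a ⬝ᵥ x + b` is linear in the pair `(a, b)`, which ranges
over a space of dimension `n + 1`. Hence if `x` satisfies a maximal linearly independent subfamily
of a family of equations, it satisfies the whole family: at most `n + 1` equations detect every
violation. Remove such a subfamily `k + 1` times in succession and let `T` be the union of the
removed subfamilies. An assignment violating an equation outside `T` violates one equation in each
of the `k + 1` disjoint subfamilies, hence more than `k` equations of `T`.
-/

open Finset Module

theorem exists_finset_card_le_mul_of_forall_exists_hitting {α ι : Type*} (r : α → ι → Prop)
    [∀ x, DecidablePred (r x)] (d : ℕ)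
    (hitting : ∀ T : Finset ι, ∃ B : Finset ι,
      Disjoint T B ∧ #B ≤ d ∧ ∀ x, ∀ i ∉ T, r x i → ∃ l ∈ B, r x l) (j : ℕ) :
    ∃ T : Finset ι, #T ≤ d * j ∧ ∀ x, #{i ∈ T | r x i} < j → ∀ i ∉ T, ¬ r x i := by
  induction j with
  | zero => exact ⟨∅, by simp, by simp⟩
  | succ j ih =>
    obtain ⟨T, hT_card, hT⟩ := ih
    obtain ⟨B, hTB, hB_card, hB⟩ := hitting T
    refine ⟨T.disjUnion B hTB, ?_, fun x hx i hi hri ↦ ?_⟩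
    · rw [card_disjUnion, mul_add_one]
      exact add_le_add hT_card hB_card
    · have hiT : i ∉ T := fun h ↦ hi (mem_disjUnion.2 (.inl h))
      obtain ⟨l, hlB, hrl⟩ := hB x i hiT hri
      have hB_pos : 0 < #{i ∈ B | r x i} := card_pos.2 ⟨l, mem_filter.2 ⟨hlB, hrl⟩⟩
      rw [filter_disjUnion, card_disjUnion] at hx
      exact hT x (by lia) i hiT hri

theorem exists_finset_subset_card_le_finrank_image_subset_span {K V ι : Type*} [DivisionRing K]
    [AddCommGroup V] [Module K V] [Module.Finite K V] (v : ι → V) (s : Set ι) :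
    ∃ B : Finset ι, ↑B ⊆ s ∧ #B ≤ finrank K V ∧ v '' s ⊆ Submodule.span K (v '' B) := by
  obtain ⟨B, hBs, -, hspan, hli⟩ :=
    exists_linearIndepOn_extension (linearIndepOn_empty K v) (Set.empty_subset s)
  have hB_finite : B.Finite := LinearIndependent.finite hli
  lift B to Finset ι using hB_finite
  exact ⟨B, hBs, by simpa using LinearIndependent.fintype_card_le_finrank hli, hspan⟩

theorem exists_mem_apply_ne_zero_of_mem_span {R M N : Type*} [Semiring R] [AddCommMonoid M]
    [Module R M] [AddCommMonoid N] [Module R N] {f : M →ₗ[R] N} {s : Set M} {y : M}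
    (hy : y ∈ Submodule.span R s) (hfy : f y ≠ 0) : ∃ z ∈ s, f z ≠ 0 := by
  by_contra! h
  exact hfy (LinearMap.eqOn_span (g := 0) h hy)

/-- The value at the point `x` of the affine polynomial with coefficient vector `p.1` and constant
term `p.2`, as a linear form in `p`. The coefficients stand to the left of the coordinates of `x`,
so this is linear over noncommutative `R` too. -/
def affineEval {R σ : Type*} [Semiring R] [Fintype σ] (x : σ → R) : (σ → R) × R →ₗ[R] R :=
  ((dotProductBilin R Rᵐᵒᵖ).flip x).coprod LinearMap.id

theorem affineEval_apply {R σ : Type*} [Semiring R] [Fintype σ] (x : σ → R) (p : (σ → R) × R) :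
    affineEval x p = p.1 ⬝ᵥ x + p.2 :=
  rfl

theorem exists_finset_disjoint_card_le_hitting_violated {K ι σ : Type*} [DivisionRing K]
    [Fintype σ] (a : ι → σ → K) (b : ι → K) (T : Finset ι) :
    ∃ B : Finset ι, Disjoint T B ∧ #B ≤ Fintype.card σ + 1 ∧
      ∀ x : σ → K, ∀ i ∉ T, a i ⬝ᵥ x + b i ≠ 0 → ∃ l ∈ B, a l ⬝ᵥ x + b l ≠ 0 := by
  obtain ⟨B, hBT, hB_card, hspan⟩ :=
    exists_finset_subset_card_le_finrank_image_subset_span (K := K) (fun i ↦ (a i, b i)) {i | i ∉ T}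
  refine ⟨B, disjoint_right.2 fun _ hl ↦ hBT hl, by simpa using hB_card, fun x i hi hne ↦ ?_⟩
  simp only [← affineEval_apply x (a _, b _)] at hne ⊢
  simpa only [Set.exists_mem_image, mem_coe] using
    exists_mem_apply_ne_zero_of_mem_span (hspan (Set.mem_image_of_mem _ hi)) hne

theorem linear_equations_kernel_general {K ι σ : Type*} [DivisionRing K] [DecidableEq K]
    [Fintype σ] (k : ℕ) (a : ι → σ → K) (b : ι → K) :
    ∃ T : Finset ι, #T ≤ (Fintype.card σ + 1) * (k + 1) ∧
      ∀ x : σ → K, #{i ∈ T | a i ⬝ᵥ x + b i ≠ 0} ≤ k → ∀ i ∉ T, a i ⬝ᵥ x + b i = 0 := by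
  simpa only [Nat.lt_succ_iff, not_not] using
    exists_finset_card_le_mul_of_forall_exists_hitting (fun x i ↦ a i ⬝ᵥ x + b i ≠ 0) _
      (exists_finset_disjoint_card_le_hitting_violated a b) (k + 1)

/-- For every finite (indexed) family of `m` affine linear equations
`aᵢ ⬝ x + bᵢ = 0` in `n` real variables and every positive integer `k`,
there is a subfamily `T` of at most `(n+1)(k+1)` equations such that every
assignment violating at most `k` equations of `T` satisfies all equations
outside `T`. -/
theorem linear_equations_kernel (m n k : ℕ) (hk : 0 < k)
    (a : Fin m → Fin n → ℝ) (b : Fin m → ℝ) :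
    ∃ T : Finset (Fin m), T.card ≤ (n + 1) * (k + 1) ∧
      ∀ x : Fin n → ℝ,
        (T.filter fun i => a i ⬝ᵥ x + b i ≠ 0).card ≤ k →
          ∀ i ∉ T, a i ⬝ᵥ x + b i = 0 := by
  simpa only [Fintype.card_fin] using linear_equations_kernel_general k a b
end

section
/- Let G be a simple graph, x a vertex of G, and k a natural number. Suppose there exist k+1 cycles C₁, ..., C_{k+1} in G such that the vertex sets of any two distinct cycles Cᵢ and Cⱼ intersect exactly in {x} (an x-flower of order k+1). Then every set S of vertices with |S| ≤ k such that G − S contains no cycle must contain x. -/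
/-!
If `x ∉ S`, then every petal meets `S` in a vertex other than the centre. The petals are disjoint
away from the centre, so these vertices are distinct and `S` has at least as many elements as
there are petals.
-/

open scoped Cardinal Function

universe u v

theorem exists_mem_support_mem_of_isAcyclic_induce_compl {V : Type*} {G : SimpleGraph V}
    {S : Set V} (hS : (G.induce Sᶜ).IsAcyclic) {w : V} {c : G.Walk w w} (hc : c.IsCycle) :
    ∃ y ∈ c.support, y ∈ S := by
  by_contra! hcS
  have hmap : ((c.induce Sᶜ hcS).map (SimpleGraph.Embedding.induce Sᶜ).toHom).IsCycle := by
    rwa [SimpleGraph.Walk.map_induce]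
  exact hS _ hmap.of_map

theorem lift_mk_le_lift_mk_of_pairwise_disjoint_of_inter_nonempty {ι : Type u} {α : Type v}
    {A : ι → Set α} {S : Set α} (hA : Pairwise (Disjoint on A)) (hAS : ∀ i, (A i ∩ S).Nonempty) :
    Cardinal.lift.{v} #ι ≤ Cardinal.lift.{u} #S := by
  choose f hfA hfS using hAS
  have hf : Function.Injective f := fun i j hij ↦
    hA.eq (Set.not_disjoint_iff.2 ⟨f i, hfA i, hij ▸ hfA j⟩)
  exact Cardinal.lift_mk_le_lift_mk_of_injective (hf.codRestrict hfS)

theorem flower_forces_vertex_general {V : Type u} {ι : Type v} (G : SimpleGraph V) (x : V)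
    {w : ι → V} (C : ∀ i, G.Walk (w i) (w i)) (hcyc : ∀ i, (C i).IsCycle)
    (hflower : Pairwise fun i j ↦ {y | y ∈ (C i).support} ∩ {y | y ∈ (C j).support} ⊆ {x})
    (S : Set V) (hS : Cardinal.lift.{v} #S < Cardinal.lift.{u} #ι)
    (hacyc : (G.induce Sᶜ).IsAcyclic) :
    x ∈ S := by
  by_contra hx
  have hdisj : Pairwise (Disjoint on fun i ↦ {y | y ∈ (C i).support} \ {x}) := fun i j hij ↦
    Set.disjoint_left.2 fun _ hi hj ↦ hi.2 (hflower hij ⟨hi.1, hj.1⟩)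
  have hmeet (i : ι) : (({y | y ∈ (C i).support} \ {x}) ∩ S).Nonempty := by
    obtain ⟨y, hyC, hyS⟩ := exists_mem_support_mem_of_isAcyclic_induce_compl hacyc (hcyc i)
    exact ⟨y, ⟨hyC, ne_of_mem_of_not_mem hyS hx⟩, hyS⟩
  exact hS.not_ge (lift_mk_le_lift_mk_of_pairwise_disjoint_of_inter_nonempty hdisj hmeet)

/-- If a finite simple graph `G` has an `x`-flower of order `k+1`, i.e. `k+1` cycles
whose vertex sets pairwise intersect exactly in `{x}`, then every set `S` of at most
`k` vertices such that `G − S` is acyclic must contain `x`. -/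
theorem flower_forces_vertex {V : Type*} [Fintype V] (G : SimpleGraph V) (x : V) (k : ℕ)
    (C : Fin (k + 1) → G.Walk x x) (hcyc : ∀ i, (C i).IsCycle)
    (hflower : ∀ i j, i ≠ j →
      {v | v ∈ (C i).support} ∩ {v | v ∈ (C j).support} = ({x} : Set V))
    (S : Set V) (hS : S.ncard ≤ k)
    (hacyc : (G.induce {v | v ∉ S}).IsAcyclic) :
    x ∈ S := by
  have hcard : Cardinal.lift.{0} #S < Cardinal.lift #(Fin (k + 1)) := by
    simpa [← Set.cast_ncard S.toFinite] using mod_cast hS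
  exact flower_forces_vertex_general G x C hcyc (fun i j hij ↦ (hflower i j hij).subset) S
    hcard hacyc
end

section
/- Let G be a finite simple graph with no cycles (a forest) and let Q be a set of vertices of G. If at least one connected component of G − Q has exactly two neighbors in Q, then the number of connected components C of G − Q such that the neighborhood in G of the vertex set of C intersects Q in exactly two vertices is at most |Q| − 1. -/
/-- The set of neighbors in `Q` of a connected component `C` of `G − Q`:
the vertices `q ∈ Q` adjacent in `G` to at least one vertex of `C`. -/
def componentNbrsIn {V : Type*} (G : SimpleGraph V) (Q : Set V)
    (C : (G.induce {v | v ∉ Q}).ConnectedComponent) : Set V :=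
  {q | q ∈ Q ∧ ∃ v : ↥{v | v ∉ Q},
      (G.induce {v | v ∉ Q}).connectedComponentMk v = C ∧ G.Adj q ↑v}

/-!
Suppose `a` and `b` are distinct neighbors in `Q` of a component `C` of `G − Q`. Every edge of a
forest is a bridge, so deleting an edge from `a` to `C` separates `a` from `b`, while the neighbors
of any other component stay connected to each other through that component. The differences
`e_a − e_b`, one for each component, are therefore linearly independent, as the indicator functions
of the sides of the cuts witness. Their coordinates sum to zero, so they span a proper subspace of
the free vector space on `Q`.
-/

open scoped Cardinal

section Separation

variable {V : Type*} {G : SimpleGraph V}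

theorem reachable_deleteEdges_of_induce {s : Set V} {e : Sym2 V} {x : V} (hxe : x ∈ e)
    (hxs : x ∉ s) {u w : s} (h : (G.induce s).Reachable u w) :
    (G.deleteEdges {e}).Reachable (u : V) w := by
  have induce_eq : (G.deleteEdges {e}).induce s = G.induce s := by
    ext y z
    simp only [SimpleGraph.comap_adj, SimpleGraph.deleteEdges_adj, Set.mem_singleton_iff,
      Function.Embedding.subtype_apply, and_iff_left_iff_imp]
    rintro - rfl
    rcases Sym2.mem_iff.mp hxe with rfl | rfl
    exacts [hxs y.2, hxs z.2]
  rw [← induce_eq] at h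
  exact h.map (SimpleGraph.Embedding.induce s).toHom

variable {Q : Set V} {C : (G.induce {v | v ∉ Q}).ConnectedComponent}

theorem reachable_deleteEdges_of_mem_componentNbrsIn {a x : V} {v u : {v | v ∉ Q}} (ha : a ∈ Q)
    (hx : x ∈ componentNbrsIn G Q C) (hu : (G.induce {v | v ∉ Q}).connectedComponentMk u = C)
    (hne : x ≠ a ∨ (G.induce {v | v ∉ Q}).connectedComponentMk v ≠ C) :
    (G.deleteEdges {s(a, (v : V))}).Reachable x u := by
  obtain ⟨hxQ, w, hw, hxw⟩ := hx
  have edge_ne : s(x, (w : V)) ≠ s(a, (v : V)) := by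
    intro h
    rcases Sym2.eq_iff.mp h with ⟨hxa, hwv⟩ | ⟨hxv, -⟩
    · exact hne.elim (· hxa) (· (Subtype.ext hwv ▸ hw))
    · exact v.2 (hxv ▸ hxQ)
  have hxw' : (G.deleteEdges {s(a, (v : V))}).Adj x w :=
    SimpleGraph.deleteEdges_adj.mpr ⟨hxw, edge_ne⟩
  exact hxw'.reachable.trans <| reachable_deleteEdges_of_induce (Sym2.mem_mk_left a _)
    (not_not_intro ha) (SimpleGraph.ConnectedComponent.exact (hw.trans hu.symm))

theorem exists_set_separating_componentNbrsIn (hG : G.IsAcyclic) {a : V}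
    (ha : a ∈ componentNbrsIn G Q C) :
    ∃ A : Set V, a ∈ A ∧ (∀ b ∈ componentNbrsIn G Q C, b ≠ a → b ∉ A) ∧
      ∀ C' ≠ C, ∀ x ∈ componentNbrsIn G Q C', ∀ y ∈ componentNbrsIn G Q C', x ∈ A ↔ y ∈ A := by
  obtain ⟨haQ, v, rfl, hav⟩ := ha
  let H := G.deleteEdges {s(a, (v : V))}
  have not_reachable : ¬ H.Reachable a v :=
    SimpleGraph.isBridge_iff.mp (SimpleGraph.isAcyclic_iff_forall_adj_isBridge.mp hG hav)
  refine ⟨{x | H.Reachable a x}, .rfl, fun b hb hba hab => not_reachable ?_,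
    fun C' hC' x hx y hy => ?_⟩
  · exact hab.trans (reachable_deleteEdges_of_mem_componentNbrsIn haQ hb rfl (.inl hba))
  · obtain ⟨u, hu⟩ := C'.exists_rep
    have reachable_u {z : V} (hz : z ∈ componentNbrsIn G Q C') : H.Reachable z u :=
      reachable_deleteEdges_of_mem_componentNbrsIn haQ hz hu (.inr hC'.symm)
    have hxy : H.Reachable x y := (reachable_u hx).trans (reachable_u hy).symm
    exact ⟨fun h => h.trans hxy, fun h => h.trans hxy.symm⟩

end Separation

theorem mk_add_one_le_of_separating_sets.{u} {ι X : Type u} [Nonempty X] (a b : ι → X)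
    (A : ι → Set X) (ha : ∀ i, a i ∈ A i) (hb : ∀ i, b i ∉ A i)
    (hab : ∀ i j, i ≠ j → (a j ∈ A i ↔ b j ∈ A i)) : #ι + 1 ≤ #X := by
  classical
  obtain ⟨x₀⟩ := ‹Nonempty X›
  let vec : Option ι → X →₀ ℚ
    | none => .single x₀ 1
    | some i => .single (a i) 1 - .single (b i) 1
  -- The indicator functions are shifted to vanish at `x₀`, which makes the two families dual.
  let weight : Option ι → X → ℚ
    | none => 1
    | some i => fun x => (A i).indicator 1 x - (A i).indicator 1 x₀
  have independent : LinearIndependent ℚ vec := by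
    refine .of_pairwise_dual_eq_zero_one vec (fun o => Finsupp.linearCombination ℚ (weight o)) ?_ ?_
    · rintro (_ | i) (_ | j) hij
      · exact absurd rfl hij
      · simp [vec, weight]
      · simp [vec, weight]
      · have hij' : i ≠ j := fun h => hij (congrArg some h)
        simp [vec, weight, Set.indicator_apply, hab i j hij']
    · rintro (_ | i)
      · simp [vec, weight]
      · simp [vec, weight, ha i, hb i]
  simpa only [Cardinal.mk_option, rank_finsupp_self, Cardinal.lift_uzero, Cardinal.lift_id]
    using independent.cardinal_lift_le_rank

theorem forest_two_neighbor_components_bound_general {V : Type*} (G : SimpleGraph V)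
    (hG : G.IsAcyclic) (Q : Set V) (hQ : Q.Nonempty) :
    #{C : (G.induce {v | v ∉ Q}).ConnectedComponent | (componentNbrsIn G Q C).Nontrivial} + 1 ≤
      #Q := by
  have := hQ.to_subtype
  choose a ha b hb hab using fun C : {C | (componentNbrsIn G Q C).Nontrivial} => C.2
  choose A haA hbA hA using fun C => exists_set_separating_componentNbrsIn hG (ha C)
  refine mk_add_one_le_of_separating_sets (fun C => (⟨a C, (ha C).1⟩ : Q))
    (fun C => ⟨b C, (hb C).1⟩) (fun C => Subtype.val ⁻¹' A C) haA
    (fun C => hbA C (b C) (hb C) (hab C).symm) fun C C' hne => ?_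
  exact hA C C' (Subtype.coe_ne_coe.mpr hne.symm) _ (ha C') _ (hb C')

/-- In a forest `G`, if some connected component of `G − Q` has exactly two
neighbors in `Q`, then the number of connected components of `G − Q` having
exactly two neighbors in `Q` is at most `|Q| − 1`. -/
theorem forest_two_neighbor_components_bound {V : Type*} [Fintype V]
    (G : SimpleGraph V) (hG : G.IsAcyclic) (Q : Set V)
    (hex : ∃ C : (G.induce {v | v ∉ Q}).ConnectedComponent,
      (componentNbrsIn G Q C).ncard = 2) :
    {C : (G.induce {v | v ∉ Q}).ConnectedComponent |
        (componentNbrsIn G Q C).ncard = 2}.ncard ≤ Q.ncard - 1 := by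
  have nontrivial_of_ncard {C} (hC : (componentNbrsIn G Q C).ncard = 2) :
      (componentNbrsIn G Q C).Nontrivial := Set.one_lt_ncard_iff_nontrivial.mp (hC ▸ one_lt_two)
  obtain ⟨C₀, hC₀⟩ := hex
  have hQ : Q.Nonempty := (nontrivial_of_ncard hC₀).nonempty.mono fun _ => And.left
  have bound := forest_two_neighbor_components_bound_general G hG Q hQ
  rw [← Set.cast_ncard (Set.toFinite _), ← Set.cast_ncard (Set.toFinite _)] at bound
  exact (Set.ncard_le_ncard fun _ => nontrivial_of_ncard).trans
    (Nat.le_sub_one_of_lt (mod_cast bound))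
end

section
/- Let G be a finite simple graph, x a vertex of G, and k a natural number. Then either G contains k+1 cycles whose vertex sets pairwise intersect exactly in {x} (an x-flower of order k+1), or there exists a set Z ⊆ V(G) \ {x} of size at most 2k that intersects the vertex set of every cycle of G passing through x. -/
/-!
A cycle through `x` amounts to a path of `G - x` joining two distinct neighbours of `x`, so with
`A` the neighbourhood of `x` the claim is Gallai's theorem on packing and covering `A`-paths in
`G - x`.

For that theorem, double every vertex of the graph and isolate the second copies of the vertices of
`A`. Superposing a matching of the doubled graph with the perfect matching between the two copies
gives paths and cycles, and a large matching forces many of these paths to start and end over `A`.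
If there is no large matching, the obstruction provided by the Tutte–Berge theorem projects to a
small set meeting every `A`-path.
-/

open SimpleGraph

section TutteBerge

variable {V : Type*} (G : SimpleGraph V)

lemma isTutteViolator_iff_induce_compl {S : Set V} :
    G.IsTutteViolator S ↔ S.ncard < (G.induce Sᶜ).oddComponents.ncard := by
  rw [IsTutteViolator, Subgraph.deleteVerts, Subgraph.verts_top, ← Set.compl_eq_univ_sdiff,
    ← induce_eq_coe_induce_top]
  rfl

variable {G} in
lemma ncard_oddComponents_congr {W : Type*} {H : SimpleGraph W} (φ : G ≃g H) :
    G.oddComponents.ncard = H.oddComponents.ncard :=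
  Set.ncard_congr' <| φ.connectedComponentEquiv.subtypeEquiv fun c => by
    rw [Set.mem_ofPred_eq, Set.mem_ofPred_eq, ← Nat.card_coe_set_eq, ← Nat.card_coe_set_eq,
      Nat.card_congr (c.isoEquivSupp φ)]

lemma even_ncard_oddComponents_induce_compl_add [Finite V] (S : Set V) :
    Even ((G.induce Sᶜ).oddComponents.ncard + S.ncard + Nat.card V) := by
  have hodd := odd_ncard_oddComponents (G.induce Sᶜ)
  have hcard := Set.ncard_add_ncard_compl S
  rw [Nat.card_coe_set_eq] at hodd
  rw [← hcard]
  grind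

/-- The join of `G` with the complete graph on `W`. A perfect matching of it restricts
to a matching of `G` that misses at most `|W|` vertices. -/
def joinTop (W : Type*) : SimpleGraph (V ⊕ W) :=
  (Gᶜ ⊕g (⊥ : SimpleGraph W))ᶜ

variable {W : Type*}

lemma joinTop_adj_inl {v w : V} : (joinTop G W).Adj (.inl v) (.inl w) ↔ G.Adj v w := by
  simp only [joinTop, compl_adj, ne_eq, Sum.inl.injEq, sum_adj_inl, not_and, not_not]
  exact ⟨fun h => h.2 h.1, fun h => ⟨h.ne, fun _ => h⟩⟩

lemma joinTop_adj_inr {p : V ⊕ W} {i : W} : (joinTop G W).Adj p (.inr i) ↔ p ≠ .inr i := by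
  cases p <;> simp [joinTop]

lemma subsingleton_connectedComponent_induce_joinTop {S : Set (V ⊕ W)} {i : W}
    (hi : .inr i ∉ S) : Subsingleton ((joinTop G W).induce Sᶜ).ConnectedComponent := by
  have reachable_inr (p : ↥Sᶜ) : ((joinTop G W).induce Sᶜ).Reachable p ⟨.inr i, hi⟩ := by
    by_cases hp : p.1 = .inr i
    · exact (show p = ⟨.inr i, hi⟩ from Subtype.ext hp) ▸ .rfl
    · exact Adj.reachable ((joinTop_adj_inr G).2 hp)
  exact Preconnected.subsingleton_connectedComponent fun p q =>
    (reachable_inr p).trans (reachable_inr q).symm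

lemma exists_iso_induce_compl_joinTop {S : Set (V ⊕ W)} (hS : ∀ i, .inr i ∈ S) :
    Nonempty (G.induce (Sum.inl ⁻¹' S)ᶜ ≃g (joinTop G W).induce Sᶜ) := by
  refine ⟨RelIso.ofSurjective
    ⟨⟨fun v => ⟨.inl v, v.2⟩, fun v w h => Subtype.ext (Sum.inl_injective (congrArg (·.1) h))⟩,
      joinTop_adj_inl G⟩ ?_⟩
  rintro ⟨v | i, hp⟩
  · exact ⟨⟨v, hp⟩, rfl⟩
  · exact absurd (hS i) hp

lemma exists_ncard_add_lt_of_isTutteViolator_joinTop [Finite V] [Finite W]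
    (heven : Even (Nat.card V + Nat.card W)) {S : Set (V ⊕ W)}
    (hS : (joinTop G W).IsTutteViolator S) :
    ∃ T : Set V, T.ncard + Nat.card W < (G.induce Tᶜ).oddComponents.ncard := by
  rw [isTutteViolator_iff_induce_compl] at hS
  have inr_mem (i : W) : .inr i ∈ S := by
    by_contra hi
    have := subsingleton_connectedComponent_induce_joinTop G hi
    have hle := Set.ncard_le_one_of_subsingleton ((joinTop G W).induce Sᶜ).oddComponents
    have hpar := even_ncard_oddComponents_induce_compl_add (joinTop G W) S
    rw [Nat.card_sum] at hpar
    grind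
  obtain ⟨φ⟩ := exists_iso_induce_compl_joinTop G inr_mem
  have hS_eq : S = Sum.inl '' (Sum.inl ⁻¹' S) ∪ Set.range .inr := by
    ext (v | i) <;> simp [inr_mem]
  have hcard : S.ncard = (Sum.inl ⁻¹' S).ncard + Nat.card W := by
    conv_lhs => rw [hS_eq]
    rw [Set.ncard_union_eq (Set.disjoint_left.2 (by simp)),
      Set.ncard_image_of_injective _ Sum.inl_injective, ← Set.image_univ,
      Set.ncard_image_of_injective _ Sum.inr_injective, Set.ncard_univ]
  exact ⟨Sum.inl ⁻¹' S, by rwa [ncard_oddComponents_congr φ, ← hcard]⟩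

variable {G} in
lemma exists_isMatching_of_isPerfectMatching_joinTop [Finite W] {M : (joinTop G W).Subgraph}
    (hM : M.IsPerfectMatching) : ∃ N : G.Subgraph, N.IsMatching ∧ N.vertsᶜ.ncard ≤ Nat.card W := by
  let N : G.Subgraph :=
    { verts := {v | ∃ w, M.Adj (.inl v) (.inl w)}
      Adj v w := M.Adj (.inl v) (.inl w)
      adj_sub h := (joinTop_adj_inl G).1 (M.adj_sub h)
      edge_vert h := ⟨_, h⟩
      symm := ⟨fun _ _ h => h.symm⟩ }
  refine ⟨N, ?_, ?_⟩
  · rintro v ⟨w, hvw⟩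
    exact ⟨w, hvw, fun w' hvw' => Sum.inl_injective (hM.1.eq_of_adj_left hvw' hvw)⟩
  · have partner_inr (v : ↥N.vertsᶜ) : ∃ i, M.Adj (.inl v.1) (.inr i) := by
      obtain ⟨w | i, h, -⟩ := hM.1 (hM.2 (.inl v.1))
      · exact absurd ⟨w, h⟩ v.2
      · exact ⟨i, h⟩
    choose partner hpartner using partner_inr
    rw [← Nat.card_coe_set_eq]
    refine Nat.card_le_card_of_injective partner fun v w h => Subtype.ext ?_
    exact Sum.inl_injective (hM.1.eq_of_adj_right (hpartner v) (h ▸ hpartner w))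

/-- The **Tutte–Berge** theorem. -/
theorem exists_isMatching_or_ncard_add_lt_ncard_oddComponents [Finite V] (d : ℕ) :
    (∃ M : G.Subgraph, M.IsMatching ∧ M.vertsᶜ.ncard ≤ d) ∨
      ∃ S : Set V, S.ncard + d < (G.induce Sᶜ).oddComponents.ncard := by
  have of_even {d : ℕ} (heven : Even (Nat.card V + d)) :
      (∃ M : G.Subgraph, M.IsMatching ∧ M.vertsᶜ.ncard ≤ d) ∨
        ∃ S : Set V, S.ncard + d < (G.induce Sᶜ).oddComponents.ncard := by
    rw [← Nat.card_fin d] at heven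
    by_cases hviol : ∃ S, (joinTop G (Fin d)).IsTutteViolator S
    · obtain ⟨S, hS⟩ := hviol
      simpa using Or.inr (exists_ncard_add_lt_of_isTutteViolator_joinTop G heven hS)
    · obtain ⟨M, hM⟩ := tutte.2 (not_exists.1 hviol)
      simpa using Or.inl (exists_isMatching_of_isPerfectMatching_joinTop hM)
  rcases Nat.even_or_odd (Nat.card V + d) with heven | hodd
  · exact of_even heven
  have hpar := even_ncard_oddComponents_induce_compl_add G
  cases d with
  | zero =>
    refine Or.inr ⟨∅, ?_⟩
    have := hpar ∅
    rw [Set.ncard_empty] at this ⊢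
    grind
  | succ e =>
    refine (of_even (d := e) (by grind)).imp ?_ ?_
    · exact fun ⟨M, hM, hcard⟩ => ⟨M, hM, hcard.trans e.le_succ⟩
    · exact fun ⟨S, hS⟩ => ⟨S, by grind⟩

end TutteBerge

section MatchingUnion

variable {V : Type*}

lemma ncard_neighborSet_le_one_of_isMatching {G : SimpleGraph V} {M : G.Subgraph}
    (hM : M.IsMatching) (v : V) : (M.neighborSet v).ncard ≤ 1 := by
  have hsub : (M.neighborSet v).Subsingleton := fun _ hu _ hw => hM.eq_of_adj_left hu hw
  exact (Set.ncard_le_one hsub.finite).2 fun _ hu _ hw => hsub hu hw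

variable [Finite V]

lemma even_ncard_inter_verts_of_isMatching {G : SimpleGraph V} {M : G.Subgraph}
    (hM : M.IsMatching) {s : Set V} (hs : ∀ v ∈ s, ∀ w, M.Adj v w → w ∈ s) :
    Even (s ∩ M.verts).ncard := by
  classical
  have := Fintype.ofFinite V
  have hrestrict : (M.induce (s ∩ M.verts)).IsMatching := by
    rintro v ⟨hvs, hvM⟩
    obtain ⟨w, hvw, huniq⟩ := hM hvM
    exact ⟨w, ⟨⟨hvs, hvM⟩, ⟨hs v hvs w hvw, hvw.snd_mem⟩, hvw⟩, fun u hu => huniq u hu.2.2⟩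
  simpa only [Subgraph.induce_verts, Set.ncard_eq_toFinset_card'] using hrestrict.even_card

lemma ncard_le_two_of_connected {G : SimpleGraph V} (hG : G.Connected)
    (hle : ∀ v, (G.neighborSet v).ncard ≤ 2) {s : Set V}
    (hs : ∀ v ∈ s, (G.neighborSet v).ncard ≤ 1) : s.ncard ≤ 2 := by
  classical
  have := Fintype.ofFinite V
  have hdeg (v : V) : G.degree v + (if v ∈ s then 1 else 0) ≤ 2 := by
    have h2 := hle v
    have h1 := hs v
    rw [Set.ncard_eq_toFinset_card', ← neighborFinset_def, card_neighborFinset_eq_degree] at h1 h2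
    grind
  have hsum : ∑ v, G.degree v + s.ncard ≤ 2 * Nat.card V :=
    calc ∑ v, G.degree v + s.ncard
        = ∑ v, (G.degree v + if v ∈ s then 1 else 0) := by
          rw [Finset.sum_add_distrib, Finset.sum_boole, Set.ncard_eq_toFinset_card']
          simp [Set.toFinset]
      _ ≤ ∑ _v : V, 2 := Finset.sum_le_sum fun v _ => hdeg v
      _ = 2 * Nat.card V := by simp [mul_comm]
  have hedges := hG.card_vert_le_card_edgeSet_add_one
  rw [sum_degrees_eq_twice_card_edges] at hsum
  rw [Nat.card_eq_fintype_card (α := G.edgeSet), ← edgeFinset_card] at hedges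
  omega

variable {G H : SimpleGraph V} {M : G.Subgraph} {N : H.Subgraph}

lemma even_ncard_supp_sdiff_verts (hM : M.IsMatching) (hN : N.IsPerfectMatching)
    (c : (M.spanningCoe ⊔ N.spanningCoe).ConnectedComponent) :
    Even (c.supp \ M.verts).ncard := by
  have hMc := even_ncard_inter_verts_of_isMatching hM
    fun v hv w h => c.mem_supp_of_adj_mem_supp hv (Or.inl h)
  have hNc := even_ncard_inter_verts_of_isMatching hN.1
    fun v hv w h => c.mem_supp_of_adj_mem_supp hv (Or.inr h)
  rw [hN.2.verts_eq_univ, Set.inter_univ] at hNc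
  have := Set.ncard_inter_add_ncard_sdiff_eq_ncard c.supp M.verts
  grind

lemma ncard_supp_sdiff_verts_le_two (hM : M.IsMatching) (hN : N.IsMatching)
    (c : (M.spanningCoe ⊔ N.spanningCoe).ConnectedComponent) :
    (c.supp \ M.verts).ncard ≤ 2 := by
  have hnbr (v : c.supp) : (c.toSimpleGraph.neighborSet v).ncard ≤ (M.neighborSet v).ncard + 1 :=
    calc (c.toSimpleGraph.neighborSet v).ncard
        ≤ (M.neighborSet v ∪ N.neighborSet v).ncard :=
          Set.ncard_le_ncard_of_injOn Subtype.val (fun _ h => h) Subtype.val_injective.injOn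
      _ ≤ (M.neighborSet v).ncard + (N.neighborSet v).ncard := Set.ncard_union_le _ _
      _ ≤ (M.neighborSet v).ncard + 1 := by
          grw [ncard_neighborSet_le_one_of_isMatching hN v]
  have key := ncard_le_two_of_connected c.connected_toSimpleGraph (s := {v | v.1 ∉ M.verts})
    (fun v => (hnbr v).trans (by grw [ncard_neighborSet_le_one_of_isMatching hM v]))
    fun v hv => (hnbr v).trans ?_
  · rw [← Set.ncard_image_of_injective _ Subtype.val_injective] at key
    convert key using 2
    ext v
    constructor
    · exact fun ⟨hvc, hvM⟩ => ⟨⟨v, hvc⟩, hvM, rfl⟩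
    · rintro ⟨u, huM, rfl⟩
      exact ⟨u.2, huM⟩
  · have : M.neighborSet v = ∅ := Set.eq_empty_of_forall_notMem fun w h => hv (M.edge_vert h)
    rw [this, Set.ncard_empty]

end MatchingUnion

section Counting

lemma two_mul_ncard_le_of_even_fibers {X Y : Type*} [Finite X] [Finite Y] (f : X → Y)
    {B U : Set X} (hBU : B ⊆ U) (heven : ∀ y, Even (f ⁻¹' {y} ∩ U).ncard)
    (hle : ∀ y, (f ⁻¹' {y} ∩ U).ncard ≤ 2) :
    2 * B.ncard ≤ U.ncard + 2 * {y | ∃ a ∈ B, ∃ b ∈ B, a ≠ b ∧ f a = y ∧ f b = y}.ncard := by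
  classical
  have := Fintype.ofFinite X
  have := Fintype.ofFinite Y
  set D := {y | ∃ a ∈ B, ∃ b ∈ B, a ≠ b ∧ f a = y ∧ f b = y}
  have ncard_eq_sum (s : Set X) : s.ncard = ∑ y, (f ⁻¹' {y} ∩ s).ncard := by
    rw [Set.ncard_eq_toFinset_card',
      Finset.card_eq_sum_card_fiberwise (f := f) (t := Finset.univ) fun _ _ => Finset.mem_univ _]
    refine Finset.sum_congr rfl fun y _ => ?_
    rw [Set.ncard_eq_toFinset_card']
    congr 1
    ext a
    simp [and_comm]
  have hfiber (y : Y) :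
      2 * (f ⁻¹' {y} ∩ B).ncard ≤ (f ⁻¹' {y} ∩ U).ncard + 2 * if y ∈ D then 1 else 0 := by
    have hBy : (f ⁻¹' {y} ∩ B).ncard ≤ (f ⁻¹' {y} ∩ U).ncard :=
      Set.ncard_le_ncard (Set.inter_subset_inter_right _ hBU)
    have hyD (h : 1 < (f ⁻¹' {y} ∩ B).ncard) : y ∈ D := by
      obtain ⟨a, b, ⟨hay, ha⟩, ⟨hby, hb⟩, hab⟩ := (Set.one_lt_ncard_iff).1 h
      exact ⟨a, ha, b, hb, hab, hay, hby⟩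
    have h2 := hle y
    have he := heven y
    grind
  have hDcard : D.ncard = ∑ y, if y ∈ D then 1 else 0 := by
    rw [Finset.sum_boole, Set.ncard_eq_toFinset_card']
    simp [Set.toFinset]
  rw [ncard_eq_sum B, ncard_eq_sum U, hDcard, Finset.mul_sum, Finset.mul_sum,
    ← Finset.sum_add_distrib]
  exact Finset.sum_le_sum fun y _ => hfiber y

end Counting

section APaths

variable {V : Type*}

/-- `W` contains an `A`-path of `G`: a walk inside `W` joining two distinct vertices of `A`.
Working with walks rather than paths costs nothing, since a walk can be shortcut to a path inside
its own support. -/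
def HasAPathIn (G : SimpleGraph V) (A W : Set V) : Prop :=
  ∃ a ∈ A, ∃ b ∈ A, a ≠ b ∧ ∃ w : G.Walk a b, ∀ v ∈ w.support, v ∈ W

lemma HasAPathIn.mono {G : SimpleGraph V} {A W W' : Set V} (hW : W ⊆ W')
    (h : HasAPathIn G A W) : HasAPathIn G A W' := by
  obtain ⟨a, ha, b, hb, hab, w, hw⟩ := h
  exact ⟨a, ha, b, hb, hab, w, fun v hv => hW (hw v hv)⟩

lemma exists_walk_of_reachable_of_adj {X : Type*} {G : SimpleGraph V} {K : SimpleGraph X}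
    {f : X → V} (hf : ∀ p q, K.Adj p q → f p = f q ∨ G.Adj (f p) (f q)) {p q : X}
    (h : K.Reachable p q) :
    ∃ w : G.Walk (f p) (f q), ∀ v ∈ w.support, ∃ r, K.Reachable p r ∧ f r = v := by
  obtain ⟨u⟩ := h
  induction u with
  | @nil p => exact ⟨.nil, fun v hv => ⟨p, .rfl, (List.mem_singleton.1 hv).symm⟩⟩
  | @cons p p' q hadj _ ih =>
    obtain ⟨w, hw⟩ := ih
    have hlift (v : V) (hv : v ∈ w.support) : ∃ r, K.Reachable p r ∧ f r = v :=
      (hw v hv).imp fun r hr => ⟨hadj.reachable.trans hr.1, hr.2⟩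
    rcases hf p p' hadj with heq | hadj'
    · exact ⟨w.copy heq.symm rfl, by simpa only [Walk.support_copy] using hlift⟩
    · refine ⟨.cons hadj' w, fun v hv => ?_⟩
      rcases List.mem_cons.1 hv with rfl | hv
      · exact ⟨p, .rfl, rfl⟩
      · exact hlift v hv

lemma reachable_of_walk_of_adj {X : Type*} {G : SimpleGraph V} {K : SimpleGraph X} {f : X → V}
    {P : Set X} (hf : ∀ p ∈ P, ∀ q ∈ P, f p = f q ∨ G.Adj (f p) (f q) → K.Reachable p q)
    {p q : X} (hp : p ∈ P) (hq : q ∈ P) (w : G.Walk (f p) (f q))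
    (hw : ∀ v ∈ w.support, ∃ r ∈ P, f r = v) : K.Reachable p q := by
  generalize ha : f p = a at w
  generalize hb : f q = b at w
  induction w generalizing p with
  | nil => exact hf p hp q hq (.inl (ha.trans hb.symm))
  | cons hadj w ih =>
    obtain ⟨r, hr, rfl⟩ := hw _ (List.mem_cons_of_mem _ w.start_mem_support)
    exact (hf p hp r hr (.inr (ha ▸ hadj))).trans
      (ih hr rfl hb fun v hv => hw v (List.mem_cons_of_mem _ hv))

end APaths

section Gallai

variable {V : Type*}

/-- Two copies of `G`, with vertices adjacent whenever their projections to `G` are equal or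
adjacent, except that the second copy `(a, true)` of a vertex `a ∈ A` is isolated. Large
matchings of this graph yield disjoint `A`-paths of `G`. -/
def gallaiGraph (G : SimpleGraph V) (A : Set V) : SimpleGraph (V × Bool) where
  Adj p q := p ≠ q ∧ p ∉ A ×ˢ {true} ∧ q ∉ A ×ˢ {true} ∧ (p.1 = q.1 ∨ G.Adj p.1 q.1)
  symm := ⟨fun _ _ h => ⟨h.1.symm, h.2.2.1, h.2.1, h.2.2.2.imp Eq.symm Adj.symm⟩⟩
  loopless := ⟨fun _ h => h.1 rfl⟩

/-- The perfect matching joining the two copies of each vertex. The ambient graph is complete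
because `gallaiGraph G A` lacks the edges over `A`. -/
def fiberMatching (V : Type*) : (⊤ : SimpleGraph (V × Bool)).Subgraph where
  verts := Set.univ
  Adj p q := p.1 = q.1 ∧ p ≠ q
  adj_sub h := h.2
  edge_vert _ := Set.mem_univ _
  symm := ⟨fun _ _ h => ⟨h.1.symm, h.2.symm⟩⟩

lemma fiberMatching_adj_iff {p q : V × Bool} : (fiberMatching V).Adj p q ↔ q = (p.1, !p.2) := by
  obtain ⟨v, b⟩ := p
  obtain ⟨w, c⟩ := q
  cases b <;> cases c <;> simp [fiberMatching, eq_comm]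

lemma isPerfectMatching_fiberMatching : (fiberMatching V).IsPerfectMatching :=
  Subgraph.isPerfectMatching_iff.2 fun p =>
    ⟨(p.1, !p.2), fiberMatching_adj_iff.2 rfl, fun _ h => fiberMatching_adj_iff.1 h⟩

variable {G : SimpleGraph V} {A : Set V}

lemma prod_true_subset_compl_verts {M : (gallaiGraph G A).Subgraph} (hM : M.IsMatching) :
    A ×ˢ {true} ⊆ M.vertsᶜ := fun _ hp hpM =>
  have ⟨_, hpq, _⟩ := hM hpM
  (M.adj_sub hpq).2.1 hp

/- In the union of the matching with the fibre matching, a component contains no or two unmatched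
vertices; it is a path between them, and projects to an `A`-path if both lie over `A`. -/
lemma exists_disjoint_hasAPathIn_of_isMatching [Finite V] {M : (gallaiGraph G A).Subgraph}
    (hM : M.IsMatching) {m : ℕ} (hm : M.vertsᶜ.ncard + 2 * m ≤ 2 * A.ncard) :
    ∃ W : Fin m → Set V, Pairwise (Function.onFun Disjoint W) ∧ ∀ i, HasAPathIn G A (W i) := by
  set K := M.spanningCoe ⊔ (fiberMatching V).spanningCoe
  have hfiber := isPerfectMatching_fiberMatching (V := V)
  set D := {c | ∃ p ∈ A ×ˢ {true}, ∃ q ∈ A ×ˢ {true}, p ≠ q ∧ K.connectedComponentMk p = c ∧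
    K.connectedComponentMk q = c}
  have hmD : m ≤ D.ncard := by
    have key : 2 * (A ×ˢ {true}).ncard ≤ M.vertsᶜ.ncard + 2 * D.ncard :=
      two_mul_ncard_le_of_even_fibers K.connectedComponentMk (prod_true_subset_compl_verts hM)
        (even_ncard_supp_sdiff_verts hM hfiber) (ncard_supp_sdiff_verts_le_two hM hfiber.1)
    rw [Set.ncard_prod, Set.ncard_singleton] at key
    omega
  obtain ⟨e⟩ : Nonempty (Fin m ↪ D) := by
    rw [← Nat.card_coe_set_eq] at hmD
    exact ⟨(Fin.castLEEmb hmD).trans (Finite.equivFin D).symm.toEmbedding⟩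
  refine ⟨fun i => Prod.fst '' (e i).1.supp, fun i j hij => Set.disjoint_left.2 ?_, fun i => ?_⟩
  · rintro _ ⟨p, hp, rfl⟩ ⟨q, hq, hqp⟩
    have hreach : K.Reachable p q := by
      by_cases h : p = q
      · exact h ▸ .rfl
      · exact Adj.reachable (.inr ⟨hqp.symm, h⟩)
    have hcomp : (e i).1 = (e j).1 := hp.symm.trans ((ConnectedComponent.eq.2 hreach).trans hq)
    exact hij (e.injective (Subtype.ext hcomp))
  · obtain ⟨⟨a, _⟩, ⟨ha, rfl⟩, ⟨b, _⟩, ⟨hb, rfl⟩, hab, hac, hbc⟩ := (e i).2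
    have hproj (p q : V × Bool) (h : K.Adj p q) : p.1 = q.1 ∨ G.Adj p.1 q.1 :=
      h.elim (fun h => (M.adj_sub h).2.2.2) fun h => .inl h.1
    obtain ⟨w, hw⟩ :=
      exists_walk_of_reachable_of_adj hproj (ConnectedComponent.eq.1 (hac.trans hbc.symm))
    refine ⟨a, ha, b, hb, fun h => hab (h ▸ rfl), w, fun v hv => ?_⟩
    obtain ⟨r, hr, rfl⟩ := hw v hv
    exact ⟨r, (ConnectedComponent.eq.2 hr).symm.trans hac, rfl⟩

lemma ncard_half_add_ncard_full_le [Finite V] (S : Set (V × Bool)) :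
    {p | p ∉ S ∧ (p.1, !p.2) ∈ S}.ncard + {v | ∀ b, (v, b) ∈ S}.ncard ≤ S.ncard := by
  have hinj : Set.InjOn Prod.fst {p | p ∉ S ∧ (p.1, !p.2) ∈ S} := by
    rintro ⟨v, b⟩ hp ⟨w, c⟩ hq rfl
    cases b <;> cases c <;> simp_all
  rw [← hinj.ncard_image, ← Set.ncard_union_eq]
  · refine (Set.ncard_le_ncard ?_).trans (Set.ncard_image_le (f := Prod.fst))
    rintro v (⟨p, hp, rfl⟩ | hv)
    · exact ⟨_, hp.2, rfl⟩
    · exact ⟨_, hv true, rfl⟩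
  · rw [Set.disjoint_left]
    rintro _ ⟨p, hp, rfl⟩ hv
    exact hp.1 (hv p.2)

lemma exists_mem_supp_of_odd_ncard_supp [Finite V] {S : Set (V × Bool)}
    {c : ((gallaiGraph G A).induce Sᶜ).ConnectedComponent} (hc : Odd c.supp.ncard) :
    ∃ p ∈ c.supp, p.1.1 ∈ A ∨ (p.1.1, !p.1.2) ∈ S := by
  by_contra! hcon
  have heven := even_ncard_inter_verts_of_isMatching
    (isPerfectMatching_fiberMatching (V := V)).1 (s := Subtype.val '' c.supp) ?_
  · rw [isPerfectMatching_fiberMatching.2.verts_eq_univ, Set.inter_univ,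
      Set.ncard_image_of_injective _ Subtype.val_injective] at heven
    exact Nat.not_odd_iff_even.2 heven hc
  · rintro _ ⟨p, hp, rfl⟩ q hpq
    obtain ⟨hpA, hpS⟩ := hcon p hp
    rw [← fiberMatching_adj_iff.1 hpq] at hpS
    refine ⟨⟨q, hpS⟩, c.mem_supp_of_adj_mem_supp hp ?_, rfl⟩
    exact ⟨hpq.2, fun h => hpA h.1, fun h => hpA (hpq.1 ▸ h.1), .inl hpq.1⟩

variable (G A) in
lemma ncard_oddComponents_gallaiGraph_le [Finite V] (S : Set (V × Bool)) :
    ((gallaiGraph G A).induce Sᶜ).oddComponents.ncard ≤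
      (((gallaiGraph G A).induce Sᶜ).connectedComponentMk '' {p | p.1 ∈ A ×ˢ {false}}).ncard +
        A.ncard + {p | p ∉ S ∧ (p.1, !p.2) ∈ S}.ncard := by
  set mk := ((gallaiGraph G A).induce Sᶜ).connectedComponentMk
  have hsub : ((gallaiGraph G A).induce Sᶜ).oddComponents ⊆ mk '' {p | p.1 ∈ A ×ˢ {false}} ∪
      mk '' {p | p.1 ∈ A ×ˢ {true}} ∪ mk '' {p | (p.1.1, !p.1.2) ∈ S} := by
    intro c hc
    obtain ⟨p, hp, hpA | hpS⟩ := exists_mem_supp_of_odd_ncard_supp hc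
    · cases hb : p.1.2
      · exact .inl (.inl ⟨p, ⟨hpA, hb⟩, hp⟩)
      · exact .inl (.inr ⟨p, ⟨hpA, hb⟩, hp⟩)
    · exact .inr ⟨p, hpS, hp⟩
  have htrue : (mk '' {p | p.1 ∈ A ×ˢ {true}}).ncard ≤ A.ncard :=
    calc (mk '' {p | p.1 ∈ A ×ˢ {true}}).ncard
        ≤ {p : ↥Sᶜ | p.1 ∈ A ×ˢ {true}}.ncard := Set.ncard_image_le
      _ ≤ (A ×ˢ {true}).ncard :=
          Set.ncard_le_ncard_of_injOn Subtype.val (fun _ h => h) Subtype.val_injective.injOn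
      _ = A.ncard := by rw [Set.ncard_prod, Set.ncard_singleton, mul_one]
  have hhalf : (mk '' {p | (p.1.1, !p.1.2) ∈ S}).ncard ≤ {p | p ∉ S ∧ (p.1, !p.2) ∈ S}.ncard :=
    (Set.ncard_image_le).trans <|
      Set.ncard_le_ncard_of_injOn Subtype.val (fun p h => ⟨p.2, h⟩) Subtype.val_injective.injOn
  grw [Set.ncard_le_ncard hsub, Set.ncard_union_le, Set.ncard_union_le, htrue, hhalf]

lemma not_hasAPathIn_of_injOn_connectedComponentMk {S : Set (V × Bool)} {P : Set ↥Sᶜ}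
    (hPA : P ⊆ {p | p.1 ∈ A ×ˢ {false}})
    (hP : P.InjOn ((gallaiGraph G A).induce Sᶜ).connectedComponentMk) :
    ¬ HasAPathIn G A (A \ ((fun p => p.1.1) '' P) ∪ {v | ∀ b, (v, b) ∈ S})ᶜ := by
  rintro ⟨a, ha, b, hb, hab, w, hw⟩
  have exists_mem_P {v : V} (hv : v ∈ w.support) (hvA : v ∈ A) : ∃ p ∈ P, p.1.1 = v :=
    by_contra fun h => hw v hv (.inl ⟨hvA, h⟩)
  have notMem_true {p : ↥Sᶜ} (hp : p ∈ P) : p.1 ∉ A ×ˢ {true} := fun h =>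
    Bool.false_ne_true ((hPA hp).2.symm.trans h.2)
  have hlift (v : V) (hv : v ∈ w.support) :
      ∃ p ∈ {p : ↥Sᶜ | p.1 ∉ A ×ˢ {true}}, p.1.1 = v := by
    by_cases hvA : v ∈ A
    · obtain ⟨p, hp, hpv⟩ := exists_mem_P hv hvA
      exact ⟨p, notMem_true hp, hpv⟩
    · obtain ⟨c, hc⟩ := not_forall.1 fun h => hw v hv (.inr h)
      exact ⟨⟨(v, c), hc⟩, fun h => hvA h.1, rfl⟩
  have hreach (p : ↥Sᶜ) (hp : p.1 ∉ A ×ˢ {true}) (q : ↥Sᶜ) (hq : q.1 ∉ A ×ˢ {true})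
      (h : p.1.1 = q.1.1 ∨ G.Adj p.1.1 q.1.1) :
      ((gallaiGraph G A).induce Sᶜ).Reachable p q := by
    by_cases hpq : p = q
    · exact hpq ▸ .rfl
    · exact Adj.reachable ⟨fun h => hpq (Subtype.ext h), hp, hq, h⟩
  obtain ⟨p, hp, rfl⟩ := exists_mem_P w.start_mem_support ha
  obtain ⟨q, hq, rfl⟩ := exists_mem_P w.end_mem_support hb
  have hpq := reachable_of_walk_of_adj (f := fun p : ↥Sᶜ => p.1.1) hreach (notMem_true hp)
    (notMem_true hq) w hlift
  exact hab (congrArg (·.1.1) (hP hp hq (ConnectedComponent.eq.2 hpq)))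

/- `Z` consists of the vertices with both copies in `S` and of the vertices of `A` outside a set `R`
of representatives, one for each component meeting the first copy of `A`. -/
variable (G A) in
lemma exists_ncard_add_ncard_oddComponents_le_not_hasAPathIn [Finite V] (S : Set (V × Bool)) :
    ∃ Z : Set V, Z.ncard + ((gallaiGraph G A).induce Sᶜ).oddComponents.ncard ≤
      2 * A.ncard + S.ncard ∧ ¬ HasAPathIn G A Zᶜ := by
  set K := (gallaiGraph G A).induce Sᶜ with hK
  obtain ⟨P, hPA, hP⟩ := Set.exists_subset_bijOn {p | p.1 ∈ A ×ˢ {false}} K.connectedComponentMk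
  set R : Set V := (fun p => p.1.1) '' P
  have hRA : R ⊆ A := by
    rintro _ ⟨p, hp, rfl⟩
    exact (hPA hp).1
  have hRcard : R.ncard = (K.connectedComponentMk '' {p | p.1 ∈ A ×ˢ {false}}).ncard := by
    rw [← hP.image_eq, hP.injOn.ncard_image]
    refine Set.InjOn.ncard_image fun p hp q hq h => Subtype.ext (Prod.ext h ?_)
    exact (hPA hp).2.trans (hPA hq).2.symm
  refine ⟨A \ R ∪ {v | ∀ b, (v, b) ∈ S}, ?_,
    not_hasAPathIn_of_injOn_connectedComponentMk hPA hP.injOn⟩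
  have hodd := ncard_oddComponents_gallaiGraph_le G A S
  have hS := ncard_half_add_ncard_full_le S
  have hZ := Set.ncard_union_le (A \ R) {v | ∀ b, (v, b) ∈ S}
  have hAR := Set.ncard_sdiff_add_ncard_of_subset hRA
  rw [← hK, ← hRcard] at hodd
  omega

/-- **Gallai's `A`-paths theorem**, in Erdős–Pósa form. -/
theorem exists_disjoint_hasAPathIn_or_exists_ncard_le [Finite V] (G : SimpleGraph V) (A : Set V)
    (k : ℕ) :
    (∃ W : Fin (k + 1) → Set V, Pairwise (Function.onFun Disjoint W) ∧
      ∀ i, HasAPathIn G A (W i)) ∨ ∃ Z : Set V, Z.ncard ≤ 2 * k ∧ ¬ HasAPathIn G A Zᶜ := by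
  rcases le_or_gt A.ncard (2 * k) with hA | hA
  · exact .inr ⟨A, hA, fun ⟨a, ha, _, _, _, w, hw⟩ => hw a w.start_mem_support ha⟩
  refine (exists_isMatching_or_ncard_add_lt_ncard_oddComponents (gallaiGraph G A)
    (2 * A.ncard - 2 * (k + 1))).imp ?_ ?_
  · rintro ⟨M, hM, hcard⟩
    exact exists_disjoint_hasAPathIn_of_isMatching hM (by omega)
  · rintro ⟨S, hS⟩
    obtain ⟨Z, hZ, hZA⟩ := exists_ncard_add_ncard_oddComponents_le_not_hasAPathIn G A S
    have hpar := even_ncard_oddComponents_induce_compl_add (gallaiGraph G A) S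
    rw [Nat.card_prod, Nat.card_eq_fintype_card (α := Bool), Fintype.card_bool] at hpar
    exact ⟨Z, by grind, hZA⟩

end Gallai

section Flower

variable {V : Type*} {G : SimpleGraph V} {x : V}

lemma exists_isCycle_of_walk_of_notMem_support {a b : V} (ha : G.Adj x a) (hb : G.Adj x b)
    (hab : a ≠ b) (w : G.Walk a b) (hx : x ∉ w.support) :
    ∃ c : G.Walk x x, c.IsCycle ∧ ∀ v ∈ c.support, v = x ∨ v ∈ w.support := by
  classical
  have hxb : x ∉ w.bypass.support := fun h => hx (w.support_bypass_subset_support h)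
  refine ⟨.cons ha (w.bypass.concat hb.symm), ?_, fun v hv => ?_⟩
  · rw [Walk.cons_isCycle_iff, Walk.concat_isPath_iff, Walk.edges_concat,
      List.concat_eq_append, List.mem_append, List.mem_singleton]
    refine ⟨⟨w.bypass_isPath, hxb⟩, not_or.2 ⟨fun h => ?_, fun h => ?_⟩⟩
    · exact hxb (Walk.fst_mem_support_of_mem_edges _ h)
    · rcases Sym2.eq_iff.1 h with ⟨hxb', -⟩ | ⟨-, hab'⟩
      · exact hb.ne hxb'
      · exact hab hab'
  · rw [Walk.support_cons, Walk.support_concat, List.mem_cons, List.mem_append,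
      List.mem_singleton] at hv
    exact hv.elim .inl fun hv => hv.elim (fun h => .inr (w.support_bypass_subset_support h)) .inl

lemma exists_walk_notMem_support_of_isCycle {u : V} {c : G.Walk u u} (hc : c.IsCycle)
    (hx : x ∈ c.support) :
    ∃ a b, G.Adj x a ∧ G.Adj x b ∧ a ≠ b ∧ ∃ w : G.Walk a b, x ∉ w.support ∧
      ∀ v ∈ w.support, v ∈ c.support := by
  classical
  have hrot := hc.rotate hx
  have hsupp (v : V) (hv : v ∈ (c.rotate x hx).support) : v ∈ c.support :=
    (c.mem_support_rotate_iff _ hx).1 hv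
  generalize c.rotate x hx = d at hrot hsupp
  cases d with
  | nil => exact absurd hrot Walk.not_isCycle_nil
  | @cons _ a _ hxa p =>
    obtain ⟨hp, hedge⟩ := (Walk.cons_isCycle_iff p hxa).1 hrot
    induction p using Walk.concatRec with
    | Hnil => exact absurd hxa G.irrefl
    | @Hconcat a b x q hbx _ =>
      rw [Walk.edges_concat, List.concat_eq_append, List.mem_append,
      List.mem_singleton] at hedge
      refine ⟨a, b, hxa, hbx.symm, ?_, q, ((Walk.concat_isPath_iff ..).1 hp).2, fun v hv => ?_⟩
      · rintro rfl
        exact hedge (.inr Sym2.eq_swap)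
      · refine hsupp v (List.mem_cons_of_mem _ ?_)
        rw [Walk.support_concat]
        exact List.mem_append_left _ hv

lemma exists_isCycle_of_hasAPathIn {W : Set ↥({x}ᶜ : Set V)}
    (h : HasAPathIn (G.induce {x}ᶜ) {v | G.Adj x v} W) :
    ∃ c : G.Walk x x, c.IsCycle ∧ ∀ v ∈ c.support, v = x ∨ v ∈ Subtype.val '' W := by
  obtain ⟨a, ha, b, hb, hab, w, hw⟩ := h
  have hsupp (v : V) (hv : v ∈ (w.map (Embedding.induce _).toHom).support) :
      v ∈ Subtype.val '' W := by
    rw [Walk.support_map] at hv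
    obtain ⟨u, hu, rfl⟩ := List.mem_map.1 hv
    exact ⟨u, hw u hu, rfl⟩
  obtain ⟨c, hc, hcw⟩ := exists_isCycle_of_walk_of_notMem_support ha hb
    (fun h => hab (Subtype.ext h)) (w.map (Embedding.induce _).toHom) fun hx => by
      obtain ⟨u, -, hu⟩ := hsupp x hx
      exact u.2 hu
  exact ⟨c, hc, fun v hv => (hcw v hv).imp_right (hsupp v)⟩

lemma hasAPathIn_of_isCycle {u : V} {c : G.Walk u u} (hc : c.IsCycle) (hx : x ∈ c.support) :
    HasAPathIn (G.induce {x}ᶜ) {v | G.Adj x v} {v | v.1 ∈ c.support} := by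
  obtain ⟨a, b, ha, hb, hab, w, hxw, hw⟩ := exists_walk_notMem_support_of_isCycle hc hx
  have hwx (v : V) (hv : v ∈ w.support) : v ∈ ({x}ᶜ : Set V) := fun hvx => hxw (hvx ▸ hv)
  refine ⟨⟨a, hwx a w.start_mem_support⟩, ha, ⟨b, hwx b w.end_mem_support⟩, hb,
    fun h => hab (congrArg Subtype.val h), w.induce _ hwx, fun v hv => hw v ?_⟩
  rw [Walk.support_induce] at hv
  exact (List.mem_attachWith ..).1 hv

end Flower

/-- Thomassé's lemma: for every finite simple graph `G`, vertex `x`, and natural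
number `k`, either `G` has an `x`-flower of order `k+1` (that is, `k+1` cycles
whose vertex sets pairwise intersect exactly in `{x}`), or there is a set
`Z ⊆ V(G) \ {x}` of size at most `2k` meeting every cycle of `G` through `x`. -/
theorem flower_or_small_hitting_set {V : Type*} [Fintype V]
    (G : SimpleGraph V) (x : V) (k : ℕ) :
    (∃ C : Fin (k + 1) → G.Walk x x, (∀ i, (C i).IsCycle) ∧
      ∀ i j, i ≠ j →
        {v | v ∈ (C i).support} ∩ {v | v ∈ (C j).support} = ({x} : Set V)) ∨
    (∃ Z : Set V, x ∉ Z ∧ Z.ncard ≤ 2 * k ∧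
      ∀ (u : V) (c : G.Walk u u), c.IsCycle → x ∈ c.support →
        ∃ z ∈ Z, z ∈ c.support) := by
  refine (exists_disjoint_hasAPathIn_or_exists_ncard_le (G.induce {x}ᶜ) {v | G.Adj x v} k).imp
    ?_ ?_
  · rintro ⟨W, hdisj, hW⟩
    choose C hC hsupp using fun i => exists_isCycle_of_hasAPathIn (hW i)
    refine ⟨C, hC, fun i j hij => Set.Subset.antisymm ?_ ?_⟩
    · rintro v ⟨hvi, hvj⟩
      rcases hsupp i v hvi with hv | ⟨p, hp, rfl⟩
      · exact hv
      rcases hsupp j _ hvj with hv | ⟨q, hq, hqp⟩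
      · exact hv
      exact absurd (Subtype.ext hqp ▸ hq) (Set.disjoint_left.1 (hdisj hij) hp)
    · rintro _ rfl
      exact ⟨(C i).start_mem_support, (C j).start_mem_support⟩
  · rintro ⟨Z, hcard, hZ⟩
    refine ⟨Subtype.val '' Z, fun ⟨v, _, hv⟩ => v.2 hv, ?_, fun u c hc hx => ?_⟩
    · rwa [Set.ncard_image_of_injective _ Subtype.val_injective]
    · by_contra! hdisj
      exact hZ ((hasAPathIn_of_isCycle hc hx).mono fun v hv hvZ => hdisj v ⟨v, hvZ, rfl⟩ hv)
end

section
/- Let G be a finite simple graph, x a vertex of G, k a natural number, and y₁, ..., y_{k+1} distinct vertices of G, all different from x. Suppose there exist 2(k+1) connected induced subgraphs H₁¹, H₂¹, H₁², H₂², ..., H₁^{k+1}, H₂^{k+1} of G whose vertex sets are pairwise disjoint and contain neither x nor any of the vertices y₁, ..., y_{k+1}, and such that for every i ∈ {1, ..., k+1} and every j ∈ {1, 2}, both x and yᵢ have at least one neighbor in Hⱼⁱ. Then G contains k+1 cycles whose vertex sets pairwise intersect exactly in {x} (an x-flower of order k+1). -/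
/-!
The two pieces attached to `yᵢ` carry two `x`–`yᵢ` paths with disjoint interiors, which close up to
a cycle inside `{x} ∪ Pᵢ`, where the petal `Pᵢ` consists of `yᵢ` and its two pieces. Petals of
distinct indices are disjoint, so the cycles meet only in `x`.
-/

section Flower

open Function SimpleGraph

variable {V ι : Type*} {G : SimpleGraph V}

theorem exists_isPath_support_subset_of_preconnected_induce {S : Set V}
    (hS : (G.induce S).Preconnected) {a b : V} (ha : a ∈ S) (hb : b ∈ S) :
    ∃ p : G.Walk a b, p.IsPath ∧ {v | v ∈ p.support} ⊆ S := by
  obtain ⟨q, hq⟩ := hS.exists_isPath ⟨a, ha⟩ ⟨b, hb⟩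
  let incl := Embedding.induce (G := G) S
  refine ⟨q.map incl.toHom, hq.map incl.injective, fun v hv => ?_⟩
  obtain ⟨w, -, rfl⟩ := List.mem_map.1 (Walk.support_map incl.toHom q ▸ hv)
  exact w.2

theorem exists_isPath_through_preconnected_induce {x y : V} {S : Set V}
    (hS : (G.induce S).Preconnected) (hxy : x ≠ y) (hxS : x ∉ S) (hyS : y ∉ S)
    (hx : ∃ a ∈ S, G.Adj x a) (hy : ∃ b ∈ S, G.Adj y b) :
    ∃ p : G.Walk x y, p.IsPath ∧ 1 < p.length ∧ {v | v ∈ p.support.tail} ⊆ insert y S := by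
  obtain ⟨a, haS, hxa⟩ := hx
  obtain ⟨b, hbS, hyb⟩ := hy
  obtain ⟨p, hp, hpS⟩ := exists_isPath_support_subset_of_preconnected_induce hS haS hbS
  have mem_support {v : V} : v ∈ (p.concat hyb.symm).support ↔ v ∈ p.support ∨ v = y := by
    simp [Walk.support_concat]
  refine ⟨.cons hxa (p.concat hyb.symm), ?_, by simp, fun v hv => ?_⟩
  · have x_notMem : x ∉ (p.concat hyb.symm).support := fun h =>
      (mem_support.1 h).elim (fun h => hxS (hpS h)) hxy
    exact (hp.concat (fun h => hyS (hpS h)) hyb.symm).cons x_notMem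
  · exact (mem_support.1 hv).elim (fun h => .inr (hpS h)) .inl

theorem exists_isCycle_through_disjoint_preconnected_induce {x y : V} {S T : Set V}
    (hS : (G.induce S).Preconnected) (hT : (G.induce T).Preconnected) (hST : Disjoint S T)
    (hxy : x ≠ y) (hxS : x ∉ S) (hxT : x ∉ T) (hyS : y ∉ S) (hyT : y ∉ T)
    (hxS_adj : ∃ a ∈ S, G.Adj x a) (hxT_adj : ∃ a ∈ T, G.Adj x a)
    (hyS_adj : ∃ b ∈ S, G.Adj y b) (hyT_adj : ∃ b ∈ T, G.Adj y b) :
    ∃ C : G.Walk x x, C.IsCycle ∧ {v | v ∈ C.support} ⊆ insert x (insert y (S ∪ T)) := by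
  obtain ⟨p, hp, hp_length, hpS⟩ :=
    exists_isPath_through_preconnected_induce hS hxy hxS hyS hxS_adj hyS_adj
  obtain ⟨q, hq, -, hqT⟩ :=
    exists_isPath_through_preconnected_induce hT hxy.symm hyT hxT hyT_adj hxT_adj
  have disjoint_ends : Disjoint (insert y S) (insert x T) := by
    simp [hxy, hxS, hyT, hST]
  have disjoint_tails : p.support.tail.Disjoint q.support.tail := fun _ hvp hvq =>
    disjoint_ends.notMem_of_mem_left (hpS hvp) (hqT hvq)
  refine ⟨p.append q, hp.isCycle_append hq disjoint_tails (.inl hp_length), fun v hv => ?_⟩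
  rw [Set.mem_ofPred_eq, Walk.mem_support_iff, Walk.mem_tail_support_append_iff] at hv
  rcases hv with hv | hv | hv
  · exact .inl hv
  · exact .inr (Set.insert_subset_insert Set.subset_union_left (hpS hv))
  · exact Set.insert_subset_insert
      (Set.subset_union_right.trans (Set.subset_insert y _)) (hqT hv)

/-- The closed walks `C i` at `x` form an `x`-flower: they are cycles which pairwise intersect
exactly in `x`. The order of the flower is the cardinality of the index type `ι`. -/
structure IsFlower {x : V} (C : ι → G.Walk x x) : Prop where
  isCycle (i : ι) : (C i).IsCycle
  support_inter_support :
    Pairwise fun i j => {v | v ∈ (C i).support} ∩ {v | v ∈ (C j).support} = {x}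

theorem IsFlower.of_support_subset_insert {x : V} {C : ι → G.Walk x x} {P : ι → Set V}
    (hC : ∀ i, (C i).IsCycle) (hP : Pairwise (Disjoint on P))
    (hCP : ∀ i, {v | v ∈ (C i).support} ⊆ insert x (P i)) : IsFlower C where
  isCycle := hC
  support_inter_support i j hij := by
    refine Set.Subset.antisymm ?_ ?_
    · calc {v | v ∈ (C i).support} ∩ {v | v ∈ (C j).support}
          ⊆ insert x (P i) ∩ insert x (P j) := Set.inter_subset_inter (hCP i) (hCP j)
        _ = {x} := by rw [← Set.insert_inter_distrib, (hP hij).inter_eq, insert_empty_eq]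
    · exact Set.singleton_subset_iff.2 ⟨(C i).start_mem_support, (C j).start_mem_support⟩

theorem pairwise_disjoint_insert {α : Type*} {y : ι → α} {U : ι → Set α} (hy : Injective y)
    (hU : Pairwise (Disjoint on U)) (hyU : ∀ i j, y j ∉ U i) :
    Pairwise (Disjoint on fun i => insert (y i) (U i)) := fun i j hij => by
  simp [onFun, hy.ne hij.symm, hyU, hU hij]

theorem disjoint_connected_pieces_give_flower_general {x : V} {y : ι → V} (hyinj : Injective y)
    (hyx : ∀ i, y i ≠ x) {H : ι → Fin 2 → Set V} (hdisj : Pairwise (Disjoint on uncurry H))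
    (hconn : ∀ i j, (G.induce (H i j)).Connected) (hxH : ∀ i j, x ∉ H i j)
    (hyH : ∀ i j i', y i' ∉ H i j) (hxadj : ∀ i j, ∃ a ∈ H i j, G.Adj x a)
    (hyadj : ∀ i j, ∃ b ∈ H i j, G.Adj (y i) b) :
    ∃ C : ι → G.Walk x x, IsFlower C := by
  have disjoint_pieces {i i' : ι} {j j' : Fin 2} (h : (i, j) ≠ (i', j')) :
      Disjoint (H i j) (H i' j') := hdisj h
  have disjoint_unions : Pairwise (Disjoint on fun i => H i 0 ∪ H i 1) := fun i i' hi => by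
    simp [onFun, disjoint_pieces, hi]
  have disjoint_petals := pairwise_disjoint_insert hyinj disjoint_unions
    fun i i' h => h.elim (hyH i 0 i') (hyH i 1 i')
  choose C hC hCP using fun i => exists_isCycle_through_disjoint_preconnected_induce
    (hconn i 0).preconnected (hconn i 1).preconnected (disjoint_pieces (by simp)) (hyx i).symm
    (hxH i 0) (hxH i 1) (hyH i 0 i) (hyH i 1 i) (hxadj i 0) (hxadj i 1) (hyadj i 0) (hyadj i 1)
  exact ⟨C, .of_support_subset_insert hC disjoint_petals hCP⟩

end Flower

/-- If there are `k+1` vertices `y₁, …, y_{k+1}` distinct from each other and from `x`,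
and `2(k+1)` pairwise disjoint connected induced subgraphs `Hⱼⁱ` (for `i ∈ Fin (k+1)`,
`j ∈ Fin 2`) avoiding `x` and all the `yᵢ`, such that for all `i, j` both `x` and `yᵢ`
have a neighbor in `Hⱼⁱ`, then `G` has an `x`-flower of order `k+1`: `k+1` cycles whose
vertex sets pairwise intersect exactly in `{x}`. -/
theorem disjoint_connected_pieces_give_flower {V : Type*} [Fintype V]
    (G : SimpleGraph V) (x : V) (k : ℕ)
    (y : Fin (k + 1) → V) (hyinj : Function.Injective y) (hyx : ∀ i, y i ≠ x)
    (H : Fin (k + 1) → Fin 2 → Set V)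
    (hdisj : ∀ (i i' : Fin (k + 1)) (j j' : Fin 2),
      (i, j) ≠ (i', j') → Disjoint (H i j) (H i' j'))
    (hconn : ∀ i j, (G.induce (H i j)).Connected)
    (hxH : ∀ i j, x ∉ H i j)
    (hyH : ∀ i j i', y i' ∉ H i j)
    (hxadj : ∀ i j, ∃ a ∈ H i j, G.Adj x a)
    (hyadj : ∀ i j, ∃ b ∈ H i j, G.Adj (y i) b) :
    ∃ C : Fin (k + 1) → G.Walk x x, (∀ i, (C i).IsCycle) ∧
      ∀ i j, i ≠ j →
        {v | v ∈ (C i).support} ∩ {v | v ∈ (C j).support} = ({x} : Set V) := by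
  obtain ⟨C, hC⟩ := disjoint_connected_pieces_give_flower_general (G := G) hyinj hyx
    (fun _ _ h => hdisj _ _ _ _ h) hconn hxH hyH hxadj hyadj
  exact ⟨C, hC.isCycle, fun _ _ hij => hC.support_inter_support hij⟩
end
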